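/- Let ρ = Σᵢ λᵢ Pᵢ be a density operator on a separable Hilbert space (λᵢ > 0, Σλᵢ = 1, Pᵢ orthogonal rank-one projections) and let A be a nonzero bounded self-adjoint operator with Tr(ρA) = 0. Then for every ε > 0 there exists a density operator σ with Tr|σ − ρ| < ε and Tr(σA) ≠ 0. -/

import Mathlib

open scoped InnerProductSpace

variable {H : Type*} [NormedAddCommGroup H] [InnerProductSpace ℂ H] [CompleteSpace H]

/-- `ζ` is orthonormal at all indices where the coefficient `l` is nonzero. -/
def OrthonormalOnSupport (l : ℕ → ℝ) (ζ : ℕ → H) : Prop :=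
  ∀ m n, l m ≠ 0 → l n ≠ 0 → ⟪ζ m, ζ n⟫_ℂ = if m = n then 1 else 0

/-- The diagonal operator `∑ₙ lₙ ⟨·, ζₙ⟩ ζₙ` applied to `x`. -/
noncomputable def diagApply (l : ℕ → ℝ) (ζ : ℕ → H) (x : H) : H :=
  ∑' n, ((l n : ℂ) * ⟪ζ n, x⟫_ℂ) • ζ n

/-- `(p, ζ)` is the canonical (diagonal) representation of a density operator:
`ρ = ∑ₙ pₙ ⟨·, ζₙ⟩ ζₙ` with `pₙ ≥ 0`, `∑ pₙ = 1` and `{ζₙ}` orthonormal. -/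
def IsDensityRep (p : ℕ → ℝ) (ζ : ℕ → H) : Prop :=
  (∀ n, 0 ≤ p n) ∧ Summable p ∧ (∑' n, p n) = 1 ∧ OrthonormalOnSupport p ζ

/-- `(m, η)` is a canonical (diagonal) representation of the self-adjoint trace-class
difference `σ - ρ` of the operators represented by `(q, ξ)` and `(p, ζ)`; its trace norm is
`∑ₙ |mₙ|`. -/
def IsDiffRep (q : ℕ → ℝ) (ξ : ℕ → H) (p : ℕ → ℝ) (ζ : ℕ → H)
    (m : ℕ → ℝ) (η : ℕ → H) : Prop :=
  (Summable fun n => |m n|) ∧ OrthonormalOnSupport m η ∧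
    ∀ x : H, diagApply q ξ x - diagApply p ζ x = diagApply m η x

/-- The trace `Tr(ρ A) = ∑ₙ pₙ ⟨A ζₙ, ζₙ⟩` (real, since `A` is self-adjoint) of `ρ A`,
for `ρ` given by the density representation `(p, ζ)`. -/
noncomputable def trFor (A : H →L[ℂ] H) (p : ℕ → ℝ) (ζ : ℕ → H) : ℝ :=
  ∑' n, p n * (⟪A (ζ n), ζ n⟫_ℂ).re

/-!
Since `A ≠ 0`, polarization gives a unit vector `v` with `⟨v, A v⟩ ≠ 0`. The convex combination
`σ = (1 - t) ρ + t |v⟩⟨v|` with `0 < t < 1` is a density operator with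
`Tr(σ A) = (1 - t) Tr(ρ A) + t ⟨v, A v⟩ = t ⟨v, A v⟩ ≠ 0`, and `σ - ρ = t |v⟩⟨v| - t ρ` is a
difference of two positive operators of trace `t`, so its trace norm is at most `2 t`. The canonical
representations of `σ` and `σ - ρ` come from the spectral theorem for compact self-adjoint
operators, and traces are compared through their independence of the Hilbert basis.
-/

open InnerProductSpace (rankOne)
open scoped ComplexOrder

universe u

section Trace

variable {𝕜 : Type*} [RCLike 𝕜] {E : Type u} [NormedAddCommGroup E] [InnerProductSpace 𝕜 E]

theorem sum_norm_inner_mul_inner_le {ι : Type*} {v : ι → E} (hv : Orthonormal 𝕜 v) (x y : E)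
    (s : Finset ι) : ∑ i ∈ s, ‖⟪x, v i⟫_𝕜 * ⟪v i, y⟫_𝕜‖ ≤ ‖x‖ * ‖y‖ := by
  have bessel (z : E) : √(∑ i ∈ s, ‖⟪v i, z⟫_𝕜‖ ^ 2) ≤ ‖z‖ :=
    Real.sqrt_le_left (norm_nonneg z) |>.2 (hv.sum_inner_products_le z)
  calc ∑ i ∈ s, ‖⟪x, v i⟫_𝕜 * ⟪v i, y⟫_𝕜‖ = ∑ i ∈ s, ‖⟪v i, x⟫_𝕜‖ * ‖⟪v i, y⟫_𝕜‖ := by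
        simp only [norm_mul, norm_inner_symm x]
    _ ≤ √(∑ i ∈ s, ‖⟪v i, x⟫_𝕜‖ ^ 2) * √(∑ i ∈ s, ‖⟪v i, y⟫_𝕜‖ ^ 2) :=
        Real.sum_mul_le_sqrt_mul_sqrt s _ _
    _ ≤ ‖x‖ * ‖y‖ := by gcongr <;> exact bessel _

/-- The operator `T` has trace `z`: its diagonal matrix entries sum to `z` unconditionally in every
Hilbert basis. Indexing by the universe of `E` loses no basis, since the vectors of a Hilbert basis
are pairwise distinct elements of `E`. -/
def HasTrace (T : E →L[𝕜] E) (z : 𝕜) : Prop :=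
  ∀ ⦃ι : Type u⦄ (b : HilbertBasis ι 𝕜 E), HasSum (fun i ↦ ⟪b i, T (b i)⟫_𝕜) z

namespace HasTrace

variable {S T : E →L[𝕜] E} {y z : 𝕜}

theorem add (hS : HasTrace S y) (hT : HasTrace T z) : HasTrace (S + T) (y + z) := fun _ b ↦ by
  simpa only [add_apply, inner_add_right] using (hS b).add (hT b)

theorem smul (hT : HasTrace T z) (c : 𝕜) : HasTrace (c • T) (c * z) := fun _ b ↦ by
  simpa only [smul_apply, inner_smul_right] using (hT b).mul_left c

theorem unique [CompleteSpace E] (hy : HasTrace T y) (hz : HasTrace T z) : y = z := by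
  obtain ⟨_, b, -⟩ := exists_hilbertBasis 𝕜 E
  exact (hy b).unique (hz b)

end HasTrace

theorem hasTrace_rankOne (x y : E) : HasTrace (rankOne 𝕜 x y) ⟪y, x⟫_𝕜 :=
  fun _ b ↦ by
    simpa only [InnerProductSpace.inner_right_rankOne_apply, mul_comm]
      using b.hasSum_inner_mul_inner y x

theorem hasTrace_of_hasSum_rankOne {κ : Type*} {x y : κ → E} {T : E →L[𝕜] E}
    (hT : HasSum (fun k ↦ rankOne 𝕜 (x k) (y k)) T)
    (hxy : Summable fun k ↦ ‖y k‖ * ‖x k‖) : HasTrace T (∑' k, ⟪y k, x k⟫_𝕜) := by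
  intro ι b
  have row (k : κ) : HasSum (fun i ↦ ⟪y k, b i⟫_𝕜 * ⟪b i, x k⟫_𝕜) ⟪y k, x k⟫_𝕜 :=
    b.hasSum_inner_mul_inner _ _
  have column (i : ι) : HasSum (fun k ↦ ⟪y k, b i⟫_𝕜 * ⟪b i, x k⟫_𝕜) ⟪b i, T (b i)⟫_𝕜 := by
    simpa [inner_smul_right] using
      (hT.mapL (ContinuousLinearMap.apply 𝕜 E (b i))).mapL (innerSL 𝕜 (b i))
  have row_norm (k : κ) : Summable fun i ↦ ‖⟪y k, b i⟫_𝕜 * ⟪b i, x k⟫_𝕜‖ := (row k).summable.norm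
  have double : Summable fun p : κ × ι ↦ ⟪y p.1, b p.2⟫_𝕜 * ⟪b p.2, x p.1⟫_𝕜 := by
    refine .of_norm <| (summable_prod_of_nonneg fun _ ↦ norm_nonneg _).2 ⟨row_norm, ?_⟩
    exact hxy.of_nonneg_of_le (fun _ ↦ tsum_nonneg fun _ ↦ norm_nonneg _) fun k ↦
      (row_norm k).tsum_le_of_sum_le (sum_norm_inner_mul_inner_le b.orthonormal (y k) (x k))
  have total := double.hasSum.prod_fiberwise row
  rw [total.tsum_eq]
  exact ((Equiv.prodComm ι κ).hasSum_iff.2 double.hasSum).prod_fiberwise column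

end Trace

section Spectral

variable {𝕜 : Type*} [RCLike 𝕜]

theorem isCompactOperator_of_hasSum {E F : Type*} [NormedAddCommGroup E] [NormedSpace 𝕜 E]
    [NormedAddCommGroup F] [NormedSpace 𝕜 F] [CompleteSpace F] {κ : Type*} {f : κ → E →L[𝕜] F}
    {T : E →L[𝕜] F} (hT : HasSum f T) (hf : ∀ k, IsCompactOperator (f k)) : IsCompactOperator T :=
  isCompactOperator_of_tendsto hT <| .of_forall fun _ ↦
    (compactOperator (.id 𝕜) E F).sum_mem fun k _ ↦ hf k

variable {E : Type*} [NormedAddCommGroup E] [InnerProductSpace 𝕜 E]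

theorem isCompactOperator_rankOne {F : Type*} [NormedAddCommGroup F] [InnerProductSpace 𝕜 F]
    (x : F) (y : E) : IsCompactOperator (rankOne 𝕜 x y) :=
  (isCompactOperator_of_locallyCompactSpace_rng (ContinuousLinearMap.toSpanSingleton 𝕜 x)).comp_clm
    (innerSL 𝕜 y)

theorem exists_hilbertBasis_eigenvectors [CompleteSpace E] {T : E →L[𝕜] E}
    (hT : IsCompactOperator T) (hT' : T.IsSymmetric) :
    ∃ (w : Set E) (b : HilbertBasis w 𝕜 E), ∀ i, T (b i) = ⟪b i, T (b i)⟫_𝕜 • b i := by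
  have closed (μ : 𝕜) : IsClosed (Module.End.eigenspace (T : E →ₗ[𝕜] E) μ : Set E) := by
    simpa [Module.End.eigenspace_def, Set.ext_iff] using
      (T - μ • (1 : E →L[𝕜] E)).isClosed_ker
  have complete (μ : 𝕜) : CompleteSpace (Module.End.eigenspace (T : E →ₗ[𝕜] E) μ) :=
    (closed μ).completeSpace_coe
  choose w c _ using fun μ : 𝕜 ↦
    exists_hilbertBasis 𝕜 (Module.End.eigenspace (T : E →ₗ[𝕜] E) μ)
  let v : (Σ μ, w μ) → E := fun i ↦ c i.1 i.2
  have hv : Orthonormal 𝕜 v := hT'.orthogonalFamily_eigenspaces.orthonormal_sigma_orthonormal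
    fun μ ↦ (c μ).orthonormal
  have hspan : (Submodule.span 𝕜 (Set.range ((↑) : Set.range v → E)))ᗮ = ⊥ := by
    rw [Subtype.range_coe, eq_bot_iff, ← T.orthogonalComplement_iSup_eigenspaces_eq_bot hT hT']
    intro x hx
    rw [← Submodule.iInf_orthogonal, Submodule.mem_iInf]
    refine fun μ ↦ (Submodule.mem_orthogonal' _ _).2 fun y hy ↦ ?_
    have expand := (((c μ).hasSum_repr ⟨y, hy⟩).mapL (Submodule.subtypeL _)).mapL (innerSL 𝕜 x)
    refine expand.unique (hasSum_zero.congr_fun fun i ↦ ?_)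
    have : ⟪x, c μ i⟫_𝕜 = 0 :=
      (Submodule.mem_orthogonal' _ _).1 hx _ (Submodule.subset_span ⟨⟨μ, i⟩, rfl⟩)
    simp [this]
  refine ⟨Set.range v, .mkOfOrthogonalEqBot hv.toSubtypeRange hspan, ?_⟩
  rw [HilbertBasis.coe_mkOfOrthogonalEqBot]
  rintro ⟨_, ⟨μ, i⟩, rfl⟩
  have hi : T (v ⟨μ, i⟩) = μ • v ⟨μ, i⟩ := Module.End.mem_eigenspace_iff.1 (c μ i).2
  simp [hi, inner_smul_right, inner_self_eq_norm_sq_to_K, hv.1]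

theorem hasSum_smul_rankOne_of_eigenvectors [CompleteSpace E] {ι : Type*} {T : E →L[𝕜] E}
    (b : HilbertBasis ι 𝕜 E) {μ : ι → 𝕜} (hb : ∀ i, T (b i) = μ i • b i) (hμ : Summable μ) :
    HasSum (fun i ↦ μ i • rankOne 𝕜 (b i) (b i)) T := by
  have hs : Summable fun i ↦ μ i • rankOne 𝕜 (b i) (b i) :=
    .of_norm <| by simpa [norm_smul, b.orthonormal.1] using hμ.norm
  have apply_eq (x : E) : T x = (∑' i, μ i • rankOne 𝕜 (b i) (b i)) x := by
    refine ((b.hasSum_repr x).mapL T).unique ?_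
    simpa [hb, b.repr_apply_apply, smul_smul, mul_comm] using
      hs.hasSum.mapL (ContinuousLinearMap.apply 𝕜 E x)
  exact ContinuousLinearMap.ext apply_eq ▸ hs.hasSum

end Spectral

section Diagonalization

variable {E : Type u} [NormedAddCommGroup E] [InnerProductSpace ℂ E]

/-- `(l, ζ)` diagonalizes the trace-class operator `T`, i.e. `T = ∑ₙ lₙ ⟨·, ζₙ⟩ ζₙ` in operator norm
with `∑ₙ |lₙ| < ∞` and `ζ` orthonormal. As in `IsDensityRep`, the `ζ n` with `l n = 0` are
arbitrary. -/
structure IsDiagonalization (T : E →L[ℂ] E) (l : ℕ → ℝ) (ζ : ℕ → E) : Prop where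
  summable : Summable fun n ↦ |l n|
  orthonormal : OrthonormalOnSupport l ζ
  hasSum : HasSum (fun n ↦ (l n : ℂ) • rankOne ℂ (ζ n) (ζ n)) T

/-- `T` is a positive trace-class operator with trace `r`. Trace class is encoded as compactness
together with convergence of the trace in every Hilbert basis. -/
structure IsPositiveTraceClass (T : E →L[ℂ] E) (r : ℝ) : Prop where
  isPositive : T.IsPositive
  isCompactOperator : IsCompactOperator T
  hasTrace : HasTrace T (r : ℂ)

theorem OrthonormalOnSupport.norm_eq_one {l : ℕ → ℝ} {ζ : ℕ → E} (h : OrthonormalOnSupport l ζ)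
    {n : ℕ} (hn : l n ≠ 0) : ‖ζ n‖ = 1 := by
  have := h n n hn hn
  rwa [if_pos rfl, inner_self_eq_norm_sq_to_K, ← RCLike.ofReal_pow, ← RCLike.ofReal_one,
    RCLike.ofReal_inj, pow_eq_one_iff_of_nonneg (norm_nonneg _) two_ne_zero] at this

theorem OrthonormalOnSupport.abs_mul_norm_sq {l : ℕ → ℝ} {ζ : ℕ → E}
    (h : OrthonormalOnSupport l ζ) (n : ℕ) : |l n| * ‖ζ n‖ ^ 2 = |l n| := by
  rcases eq_or_ne (l n) 0 with hn | hn
  · simp [hn]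
  · simp [h.norm_eq_one hn]

theorem OrthonormalOnSupport.exists_isDiagonalization [CompleteSpace E] {l : ℕ → ℝ} {ζ : ℕ → E}
    (h : OrthonormalOnSupport l ζ) (hl : Summable fun n ↦ |l n|) :
    ∃ T : E →L[ℂ] E, IsDiagonalization T l ζ := by
  have hs : Summable fun n ↦ (l n : ℂ) • rankOne ℂ (ζ n) (ζ n) :=
    .of_norm <| by simpa [norm_smul, ← pow_two, h.abs_mul_norm_sq] using hl
  exact ⟨_, hl, h, hs.hasSum⟩

namespace IsDiagonalization

variable {T : E →L[ℂ] E} {l : ℕ → ℝ} {ζ : ℕ → E}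

theorem hasSum_apply (h : IsDiagonalization T l ζ) (x : E) :
    HasSum (fun n ↦ ((l n : ℂ) * ⟪ζ n, x⟫_ℂ) • ζ n) (T x) := by
  simpa [mul_smul] using h.hasSum.mapL (ContinuousLinearMap.apply ℂ E x)

theorem diagApply_eq (h : IsDiagonalization T l ζ) (x : E) : diagApply l ζ x = T x :=
  (h.hasSum_apply x).tsum_eq

theorem apply_eq_smul (h : IsDiagonalization T l ζ) {n : ℕ} (hn : l n ≠ 0) :
    T (ζ n) = (l n : ℂ) • ζ n := by
  refine (h.hasSum_apply (ζ n)).unique ?_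
  convert hasSum_single n fun k hk ↦ ?_ using 1
  · simp [h.orthonormal.norm_eq_one hn]
  · by_cases hk0 : l k = 0
    · simp [hk0]
    · simp [h.orthonormal k n hk0 hn, hk]

theorem nonneg (h : IsDiagonalization T l ζ) (hT : T.IsPositive) (n : ℕ) : 0 ≤ l n := by
  rcases eq_or_ne (l n) 0 with hn | hn
  · exact hn.ge
  · have := hT.inner_nonneg_right (ζ n)
    simpa [h.apply_eq_smul hn, inner_smul_right, h.orthonormal.norm_eq_one hn] using this

theorem hasTrace_comp (h : IsDiagonalization T l ζ) {A : E →L[ℂ] E} (hA : A.IsSymmetric) :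
    HasTrace (A ∘L T) (trFor A l ζ : ℂ) := by
  have real (n : ℕ) : ⟪ζ n, (l n : ℂ) • A (ζ n)⟫_ℂ = (l n * (⟪A (ζ n), ζ n⟫_ℂ).re : ℝ) := by
    rw [inner_smul_right, ← hA.apply_clm (ζ n), Complex.ofReal_mul]
    exact congrArg _ (hA.coe_re_inner_apply_self (ζ n)).symm
  have hsum : HasSum (fun n ↦ rankOne ℂ ((l n : ℂ) • A (ζ n)) (ζ n)) (A ∘L T) := by
    simpa [InnerProductSpace.comp_rankOne] using
      h.hasSum.mapL (ContinuousLinearMap.compL ℂ E E E A)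
  have bound (n : ℕ) : ‖ζ n‖ * ‖(l n : ℂ) • A (ζ n)‖ ≤ |l n| * ‖A‖ :=
    calc ‖ζ n‖ * ‖(l n : ℂ) • A (ζ n)‖ ≤ ‖ζ n‖ * (|l n| * (‖A‖ * ‖ζ n‖)) := by
          rw [norm_smul, Complex.norm_real, Real.norm_eq_abs]
          gcongr
          exact A.le_opNorm _
      _ = |l n| * ‖ζ n‖ ^ 2 * ‖A‖ := by ring
      _ = |l n| * ‖A‖ := by rw [h.orthonormal.abs_mul_norm_sq]
  have summable : Summable fun n ↦ ‖ζ n‖ * ‖(l n : ℂ) • A (ζ n)‖ :=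
    (h.summable.mul_right ‖A‖).of_nonneg_of_le (fun _ ↦ by positivity) bound
  simpa only [trFor, Complex.ofReal_tsum, real] using hasTrace_of_hasSum_rankOne hsum summable

theorem hasTrace (h : IsDiagonalization T l ζ) : HasTrace T ((∑' n, l n : ℝ) : ℂ) := by
  have trFor_id : trFor (.id ℂ E) l ζ = ∑' n, l n := tsum_congr fun n ↦ by
    rcases eq_or_ne (l n) 0 with hn | hn
    · simp [hn]
    · simp [h.orthonormal.norm_eq_one hn]
  simpa [trFor_id] using h.hasTrace_comp (A := .id ℂ E) .id

theorem isPositiveTraceClass [CompleteSpace E] (h : IsDiagonalization T l ζ) (hl : ∀ n, 0 ≤ l n) :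
    IsPositiveTraceClass T (∑' n, l n) where
  isPositive := by
    rw [← ContinuousLinearMap.nonneg_iff_isPositive]
    refine h.hasSum.nonneg fun n ↦ ?_
    rw [ContinuousLinearMap.nonneg_iff_isPositive]
    exact (InnerProductSpace.isPositive_rankOne_self _).smul_of_nonneg (by exact_mod_cast hl n)
  isCompactOperator := isCompactOperator_of_hasSum h.hasSum fun n ↦
    (isCompactOperator_rankOne (ζ n) (ζ n)).smul (l n : ℂ)
  hasTrace := h.hasTrace

end IsDiagonalization

theorem exists_isDiagonalization_of_hasSum {ι : Type*} {b : ι → E} (hb : Orthonormal ℂ b)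
    {l : ι → ℝ} {T : E →L[ℂ] E} (hl : Summable fun i ↦ |l i|)
    (hT : HasSum (fun i ↦ (l i : ℂ) • rankOne ℂ (b i) (b i)) T) :
    ∃ (m : ℕ → ℝ) (ζ : ℕ → E), IsDiagonalization T m ζ ∧ ∑' n, |m n| = ∑' i, |l i| := by
  have : Countable l.support := by simpa using hl.of_abs.countable_support
  obtain ⟨e, he⟩ := exists_injective_nat l.support
  let m : ℕ → ℝ := Function.extend e (fun i ↦ l i) 0
  let ζ : ℕ → E := Function.extend e (fun i ↦ b i) 0
  have hm (i : l.support) : m (e i) = l i := he.extend_apply _ _ i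
  have hζ (i : l.support) : ζ (e i) = b i := he.extend_apply _ _ i
  have hm0 (n : ℕ) (hn : ¬∃ i, e i = n) : m n = 0 := Function.extend_apply' _ _ n hn
  have of_ne_zero (n : ℕ) (hn : m n ≠ 0) : ∃ i, e i = n := not_imp_comm.1 (hm0 n) hn
  have abs_m : HasSum (fun n ↦ |m n|) (∑' i, |l i|) := by
    rw [← he.hasSum_iff fun n hn ↦ by simp [hm0 n hn]]
    simpa [Function.comp_def, hm] using
      (hasSum_subtype_iff_of_support_subset (s := l.support) fun i ↦ by simp).2 hl.hasSum
  have hTm : HasSum (fun n ↦ (m n : ℂ) • rankOne ℂ (ζ n) (ζ n)) T := by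
    rw [← he.hasSum_iff fun n hn ↦ by simp [hm0 n hn]]
    simpa [Function.comp_def, hm, hζ] using
      (hasSum_subtype_iff_of_support_subset (s := l.support) fun i ↦ by simp +contextual).2 hT
  refine ⟨m, ζ, ⟨abs_m.summable, fun k n hk hn ↦ ?_, hTm⟩, abs_m.tsum_eq⟩
  obtain ⟨i, rfl⟩ := of_ne_zero k hk
  obtain ⟨j, rfl⟩ := of_ne_zero n hn
  classical simp [hζ, orthonormal_iff_ite.1 hb, he.eq_iff, Subtype.ext_iff]

namespace IsPositiveTraceClass

variable {X Y : E →L[ℂ] E} {x y : ℝ}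

theorem zero : IsPositiveTraceClass (0 : E →L[ℂ] E) 0 where
  isPositive := ContinuousLinearMap.isPositive_zero
  isCompactOperator := isCompactOperator_zero
  hasTrace _ _ := by simp

theorem add (hX : IsPositiveTraceClass X x) (hY : IsPositiveTraceClass Y y) :
    IsPositiveTraceClass (X + Y) (x + y) where
  isPositive := hX.isPositive.add hY.isPositive
  isCompactOperator := hX.isCompactOperator.add hY.isCompactOperator
  hasTrace := by exact_mod_cast hX.hasTrace.add hY.hasTrace

theorem smul (hX : IsPositiveTraceClass X x) {c : ℝ} (hc : 0 ≤ c) :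
    IsPositiveTraceClass ((c : ℂ) • X) (c * x) where
  isPositive := hX.isPositive.smul_of_nonneg (by exact_mod_cast hc)
  isCompactOperator := hX.isCompactOperator.smul (c : ℂ)
  hasTrace := by exact_mod_cast hX.hasTrace.smul (c : ℂ)

theorem rankOne_self (v : E) : IsPositiveTraceClass (rankOne ℂ v v) (‖v‖ ^ 2) where
  isPositive := InnerProductSpace.isPositive_rankOne_self v
  isCompactOperator := isCompactOperator_rankOne v v
  hasTrace := by simpa [inner_self_eq_norm_sq_to_K] using hasTrace_rankOne (𝕜 := ℂ) v v

theorem hasSum_re_inner (hX : IsPositiveTraceClass X x) {ι : Type u} (b : HilbertBasis ι ℂ E) :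
    HasSum (fun i ↦ (⟪b i, X (b i)⟫_ℂ).re) x := by
  simpa using Complex.hasSum_re (hX.hasTrace b)

theorem exists_isDiagonalization_sub [CompleteSpace E] (hX : IsPositiveTraceClass X x)
    (hY : IsPositiveTraceClass Y y) :
    ∃ (l : ℕ → ℝ) (ζ : ℕ → E), IsDiagonalization (X - Y) l ζ ∧ ∑' n, |l n| ≤ x + y := by
  have symm : (X - Y).IsSymmetric := hX.isPositive.isSymmetric.sub hY.isPositive.isSymmetric
  obtain ⟨w, b, hb⟩ :=
    exists_hilbertBasis_eigenvectors (hX.isCompactOperator.sub hY.isCompactOperator) symm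
  let μ : w → ℝ := fun i ↦ (⟪b i, (X - Y) (b i)⟫_ℂ).re
  have hμ (i : w) : (X - Y) (b i) = (μ i : ℂ) • b i :=
    (hb i).trans <| congrArg (· • b i) (symm.coe_re_inner_self_apply (b i)).symm
  have abs_μ_le (i : w) : |μ i| ≤ (⟪b i, X (b i)⟫_ℂ).re + (⟪b i, Y (b i)⟫_ℂ).re := by
    have hx : 0 ≤ (⟪b i, X (b i)⟫_ℂ).re := hX.isPositive.re_inner_nonneg_right (b i)
    have hy : 0 ≤ (⟪b i, Y (b i)⟫_ℂ).re := hY.isPositive.re_inner_nonneg_right (b i)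
    have : μ i = (⟪b i, X (b i)⟫_ℂ).re - (⟪b i, Y (b i)⟫_ℂ).re := by simp [μ]
    exact abs_le.2 ⟨by linarith, by linarith⟩
  have bound := (hX.hasSum_re_inner b).add (hY.hasSum_re_inner b)
  have summable : Summable fun i ↦ |μ i| :=
    bound.summable.of_nonneg_of_le (fun _ ↦ abs_nonneg _) abs_μ_le
  obtain ⟨l, ζ, h, hl⟩ := exists_isDiagonalization_of_hasSum b.orthonormal summable <|
    hasSum_smul_rankOne_of_eigenvectors b hμ (by exact_mod_cast summable.of_abs)
  exact ⟨l, ζ, h, hl.trans_le (hasSum_le abs_μ_le summable.hasSum bound)⟩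

theorem exists_isDensityRep [CompleteSpace E] (hX : IsPositiveTraceClass X 1) :
    ∃ (q : ℕ → ℝ) (ξ : ℕ → E), IsDiagonalization X q ξ ∧ IsDensityRep q ξ := by
  obtain ⟨q, ξ, h, -⟩ := hX.exists_isDiagonalization_sub zero
  rw [sub_zero] at h
  have trace : ∑' n, q n = 1 := by exact_mod_cast h.hasTrace.unique hX.hasTrace
  exact ⟨q, ξ, h, h.nonneg hX.isPositive, h.summable.of_abs, trace, h.orthonormal⟩

end IsPositiveTraceClass

theorem IsDensityRep.exists_isDiagonalization [CompleteSpace E] {p : ℕ → ℝ} {ζ : ℕ → E}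
    (h : IsDensityRep p ζ) :
    ∃ T : E →L[ℂ] E, IsDiagonalization T p ζ ∧ IsPositiveTraceClass T 1 := by
  obtain ⟨nonneg, summable, trace, orthonormal⟩ := h
  obtain ⟨T, hT⟩ := orthonormal.exists_isDiagonalization summable.abs
  exact ⟨T, hT, trace ▸ hT.isPositiveTraceClass nonneg⟩

end Diagonalization

theorem exists_norm_eq_one_inner_ne_zero {E : Type*} [NormedAddCommGroup E] [InnerProductSpace ℂ E]
    {A : E →ₗ[ℂ] E} (hA : A ≠ 0) : ∃ v, ‖v‖ = 1 ∧ ⟪v, A v⟫_ℂ ≠ 0 := by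
  have : ∃ x, ⟪x, A x⟫_ℂ ≠ 0 := by
    contrapose! hA
    exact (inner_map_self_eq_zero A).1 fun x ↦ inner_eq_zero_symm.1 (hA x)
  obtain ⟨x, hx⟩ := this
  have hx0 : x ≠ 0 := by rintro rfl; simp at hx
  exact ⟨(‖x‖⁻¹ : ℂ) • x, by simp [norm_smul, hx0], by simp [hx, hx0]⟩

theorem stmt6_general (A : H →L[ℂ] H) (hA : IsSelfAdjoint A) (hA0 : A ≠ 0)
    (p : ℕ → ℝ) (ζ : ℕ → H) (hρ : IsDensityRep p ζ) (htr : trFor A p ζ = 0) :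
    ∀ ε > (0 : ℝ), ∃ (q : ℕ → ℝ) (ξ : ℕ → H) (m : ℕ → ℝ) (η : ℕ → H),
      IsDensityRep q ξ ∧ IsDiffRep q ξ p ζ m η ∧ (∑' n, |m n|) < ε ∧ trFor A q ξ ≠ 0 := by
  intro ε hε
  obtain ⟨t, ht, htε⟩ := exists_between (show 0 < min 1 (ε / 2) by positivity)
  obtain ⟨ht1, htε⟩ := lt_min_iff.1 htε
  obtain ⟨v, hv, hAv⟩ := exists_norm_eq_one_inner_ne_zero (A := A.toLinearMap) <|
    ContinuousLinearMap.coe_injective.ne hA0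
  have hP : IsPositiveTraceClass (rankOne ℂ v v) 1 := by
    simpa [hv] using IsPositiveTraceClass.rankOne_self v
  obtain ⟨ρ, hρp, hρ1⟩ := hρ.exists_isDiagonalization
  let σ : H →L[ℂ] H := ((1 - t : ℝ) : ℂ) • ρ + (t : ℂ) • rankOne ℂ v v
  have hσ1 : IsPositiveTraceClass σ 1 := by
    simpa [σ] using (hρ1.smul (sub_nonneg.2 ht1.le)).add (hP.smul ht.le)
  obtain ⟨q, ξ, hσq, hq⟩ := hσ1.exists_isDensityRep
  obtain ⟨m, η, hm, hmt⟩ := (hP.smul ht.le).exists_isDiagonalization_sub (hρ1.smul ht.le)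
  refine ⟨q, ξ, m, η, hq, ⟨hm.summable, hm.orthonormal, fun x ↦ ?_⟩, by linarith, fun h0 ↦ hAv ?_⟩
  · rw [hσq.diagApply_eq, hρp.diagApply_eq, hm.diagApply_eq]
    simp only [σ, add_apply, sub_apply, smul_apply, Complex.ofReal_sub, Complex.ofReal_one]
    module
  · have traceA : HasTrace (A ∘L σ) (t * ⟪v, A v⟫_ℂ) := by
      simpa [σ, htr, InnerProductSpace.comp_rankOne] using
        ((hρp.hasTrace_comp hA.isSymmetric).smul ((1 - t : ℝ) : ℂ)).add
          ((hasTrace_rankOne (A v) v).smul (t : ℂ))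
    simpa [h0, ht.ne'] using (hσq.hasTrace_comp hA.isSymmetric).unique traceA

/-- Let `ρ = ∑ᵢ pᵢ Pᵢ` be a density operator (given by a canonical
representation `(p, ζ)`) and `A ≠ 0` a bounded self-adjoint operator with `Tr(ρ A) = 0`.
Then for every `ε > 0` there is a density operator `σ` (with representation `(q, ξ)`) such
that `Tr|σ - ρ| < ε` (witnessed by a canonical representation `(m, η)` of `σ - ρ`) and
`Tr(σ A) ≠ 0`. -/
theorem stmt6 [TopologicalSpace.SeparableSpace H]
    (A : H →L[ℂ] H) (hA : IsSelfAdjoint A) (hA0 : A ≠ 0)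
    (p : ℕ → ℝ) (ζ : ℕ → H) (hρ : IsDensityRep p ζ)
    (htr : trFor A p ζ = 0) :
    ∀ ε > (0 : ℝ), ∃ (q : ℕ → ℝ) (ξ : ℕ → H) (m : ℕ → ℝ) (η : ℕ → H),
      IsDensityRep q ξ ∧ IsDiffRep q ξ p ζ m η ∧ (∑' n, |m n|) < ε ∧
      trFor A q ξ ≠ 0 :=
  stmt6_general A hA hA0 p ζ hρ htr
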